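/- arXiv:1411.6363 — 2 statements merged into one kernel-verified Lean document; each statement's English description precedes it below -/
import Mathlib

section
/- Let n be a positive integer, let σ and σ' be decorated permutations of order n, and let a < b < c < a + n be integers. Suppose (a c) is an allowed boundary transposition for σ, (b c) is an allowed boundary transposition for σ', and σ ∘ t_{a,c} = σ' ∘ t_{b,c}. Then ρ := σ ∘ t_{b,c} is a decorated permutation of order n, (b c) is an allowed boundary transposition for ρ with ρ ∘ t_{b,c} = σ, and (a b) is an allowed boundary transposition for ρ with ρ ∘ t_{a,b} = σ'. (Thus σ and σ' have a common parent in the poset of decorated permutations, forming a quadrilateral.) -/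
/-- A decorated permutation of order `n`: a bijection `σ : ℤ → ℤ` with
`σ (i + n) = σ i + n` and `i ≤ σ i ≤ i + n` for all `i`. -/
def IsDecoratedPerm (n : ℤ) (σ : ℤ → ℤ) : Prop :=
  Function.Bijective σ ∧ (∀ i : ℤ, σ (i + n) = σ i + n) ∧ ∀ i : ℤ, i ≤ σ i ∧ σ i ≤ i + n

/-- The affine transposition `t_{a,b}`: swaps `a + m*n` and `b + m*n` for every `m : ℤ`
and fixes all integers not congruent to `a` or `b` modulo `n`. -/
def affT (n a b : ℤ) (i : ℤ) : ℤ :=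
  if (i - a) % n = 0 then i + (b - a)
  else if (i - b) % n = 0 then i - (b - a)
  else i

/-- `(a b)` is an allowed boundary transposition for `σ`: `a < b < a + n`,
`b ≤ σ a < σ b ≤ a + n`, and there is no `q` with `a < q < b` and `σ a < σ q < σ b`. -/
def AllowedBT (n : ℤ) (σ : ℤ → ℤ) (a b : ℤ) : Prop :=
  a < b ∧ b < a + n ∧ b ≤ σ a ∧ σ a < σ b ∧ σ b ≤ a + n ∧
    ¬ ∃ q : ℤ, a < q ∧ q < b ∧ σ a < σ q ∧ σ q < σ b

/- On a window `[w, w + n)` containing `x` and `y` the affine transposition `t_{x,y}` is an ordinary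
swap, so identities between affine transpositions can be checked on one window. In particular
`t_{b,c} t_{a,b} = t_{a,c} t_{b,c}`, hence `σ' = ρ t_{a,b}` for `ρ = σ t_{b,c}`. On `a, b, c` the
map `ρ` takes the values `σ a, σ c, σ b`: allowedness of `(b c)` for `σ'` gives `σ a < σ b`, and
then `σ c < σ b`, since `b` does not obstruct `(a c)` for `σ`. So `ρ a < ρ b < ρ c`, and the
remaining conditions on `ρ` are inherited from `σ` and `σ'`. -/

section
open Set

theorem forall_of_forall_mem_Ico {G : Type*} [AddCommGroup G] [LinearOrder G]
    [IsOrderedAddMonoid G] [Archimedean G] {n w : G} {p : G → Prop}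
    (hn : 0 < n) (hp : Function.Periodic p n) (h : ∀ i ∈ Ico w (w + n), p i) (i : G) : p i := by
  obtain ⟨j, hj, hij⟩ := hp.exists_mem_Ico hn i w
  exact hij ▸ h j hj

theorem affT_add (n a b i : ℤ) : affT n a b (i + n) = affT n a b i + n := by
  simp only [affT, add_sub_right_comm, Int.add_emod_right]
  split_ifs <;> ring

section Window

variable {n w a b c : ℤ}

theorem sub_emod_eq_zero_iff_of_mem_Ico (ha : a ∈ Ico w (w + n)) (hb : b ∈ Ico w (w + n)) :
    (a - b) % n = 0 ↔ a = b := by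
  rw [← Int.dvd_iff_emod_eq_zero, ← sub_eq_zero (a := a)]
  refine ⟨fun h => Int.eq_zero_of_abs_lt_dvd h ?_, fun h => h ▸ dvd_zero n⟩
  grind

theorem affT_eqOn_swap (ha : a ∈ Ico w (w + n)) (hb : b ∈ Ico w (w + n)) :
    EqOn (affT n a b) (Equiv.swap a b) (Ico w (w + n)) := by
  intro i hi
  simp only [affT, sub_emod_eq_zero_iff_of_mem_Ico hi ha, sub_emod_eq_zero_iff_of_mem_Ico hi hb,
    Equiv.swap_apply_def]
  grind

theorem affT_apply_left (ha : a ∈ Ico w (w + n)) (hb : b ∈ Ico w (w + n)) :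
    affT n a b a = b := by
  rw [affT_eqOn_swap ha hb ha, Equiv.swap_apply_left]

theorem affT_apply_right (ha : a ∈ Ico w (w + n)) (hb : b ∈ Ico w (w + n)) :
    affT n a b b = a := by
  rw [affT_eqOn_swap ha hb hb, Equiv.swap_apply_right]

theorem affT_apply_of_ne_of_ne (ha : a ∈ Ico w (w + n)) (hb : b ∈ Ico w (w + n))
    (hc : c ∈ Ico w (w + n)) (hca : c ≠ a) (hcb : c ≠ b) : affT n a b c = c := by
  rw [affT_eqOn_swap ha hb hc, Equiv.swap_apply_of_ne_of_ne hca hcb]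

theorem affT_mapsTo_Ico (ha : a ∈ Ico w (w + n)) (hb : b ∈ Ico w (w + n)) :
    MapsTo (affT n a b) (Ico w (w + n)) (Ico w (w + n)) := by
  intro i hi
  rw [affT_eqOn_swap ha hb hi, Equiv.swap_apply_def]
  split_ifs <;> assumption

theorem affT_involutive (ha : a ∈ Ico w (w + n)) (hb : b ∈ Ico w (w + n)) :
    Function.Involutive (affT n a b) := by
  have hn : 0 < n := by grind
  refine forall_of_forall_mem_Ico hn (w := w) (fun i => ?_) fun i hi => ?_
  · simp only [affT_add, add_left_inj]
  · rw [affT_eqOn_swap ha hb (affT_mapsTo_Ico ha hb hi), affT_eqOn_swap ha hb hi,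
      Equiv.swap_apply_self]

theorem affT_comp_affT (ha : a ∈ Ico w (w + n)) (hb : b ∈ Ico w (w + n))
    (hc : c ∈ Ico w (w + n)) (hab : a ≠ b) (hac : a ≠ c) :
    affT n b c ∘ affT n a b = affT n a c ∘ affT n b c := by
  have hn : 0 < n := by grind
  have hswap : Equiv.swap b c * Equiv.swap a b = Equiv.swap a c * Equiv.swap b c := by
    rw [Equiv.mul_swap_eq_swap_mul, Equiv.swap_apply_of_ne_of_ne hab hac, Equiv.swap_apply_left]
  refine funext (forall_of_forall_mem_Ico hn (w := w) (fun i => ?_) fun i hi => ?_)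
  · simp only [Function.comp_apply, affT_add, add_left_inj]
  · rw [Function.comp_apply, Function.comp_apply, affT_eqOn_swap hb hc (affT_mapsTo_Ico ha hb hi),
      affT_eqOn_swap ha hb hi, affT_eqOn_swap ha hc (affT_mapsTo_Ico hb hc hi),
      affT_eqOn_swap hb hc hi]
    exact Equiv.congr_fun hswap i

theorem comp_affT_comp_affT_of_eq {α : Type*} {σ σ' : ℤ → α} (ha : a ∈ Ico w (w + n))
    (hb : b ∈ Ico w (w + n)) (hc : c ∈ Ico w (w + n)) (hab : a ≠ b) (hac : a ≠ c)
    (h : σ ∘ affT n a c = σ' ∘ affT n b c) : (σ ∘ affT n b c) ∘ affT n a b = σ' := by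
  rw [Function.comp_assoc, affT_comp_affT ha hb hc hab hac, ← Function.comp_assoc, h,
    Function.comp_assoc, (affT_involutive hb hc).comp_self, Function.comp_id]

end Window

theorem IsDecoratedPerm.comp_affT {n b c : ℤ} {σ : ℤ → ℤ} (hσ : IsDecoratedPerm n σ)
    (hbc : b < c) (hcn : c < b + n) (hσb : c ≤ σ b) (hσc : σ c ≤ b + n) :
    IsDecoratedPerm n (σ ∘ affT n b c) := by
  obtain ⟨hbij, hadd, hbd⟩ := hσ
  have hn : 0 < n := by omega
  have hb : b ∈ Ico b (b + n) := by grind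
  have hc : c ∈ Ico b (b + n) := ⟨hbc.le, hcn⟩
  have hadd' (i : ℤ) : (σ ∘ affT n b c) (i + n) = (σ ∘ affT n b c) i + n := by
    simp only [Function.comp_apply, affT_add, hadd]
  refine ⟨hbij.comp (affT_involutive hb hc).bijective, hadd', ?_⟩
  refine forall_of_forall_mem_Ico hn (w := b) (fun i => ?_) fun i hi => ?_
  · simp only [hadd', add_le_add_iff_right]
  · rw [Function.comp_apply, affT_eqOn_swap hb hc hi, Equiv.swap_apply_def]
    grind

namespace AllowedBT

variable {n a b c : ℤ} {σ τ : ℤ → ℤ}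

theorem apply_right_lt_of_apply_left_lt (h : AllowedBT n σ a c) (hσ : Function.Injective σ)
    (hab : a < b) (hbc : b < c) (hlt : σ a < σ b) : σ c < σ b := by
  obtain ⟨-, -, -, -, -, hno⟩ := h
  exact lt_of_le_of_ne (not_lt.1 fun hbc' => hno ⟨b, hab, hbc, hlt, hbc'⟩) (hσ.ne hbc.ne')

theorem raise_left (h : AllowedBT n σ a b) (heq : EqOn τ σ (Ioc a b)) (hle : σ a ≤ τ a)
    (hlt : τ a < τ b) : AllowedBT n τ a b := by
  obtain ⟨hab, hbn, hσa, -, hσb, hno⟩ := h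
  have hb : τ b = σ b := heq ⟨hab, le_rfl⟩
  refine ⟨hab, hbn, hσa.trans hle, hlt, hb ▸ hσb, ?_⟩
  rintro ⟨q, haq, hqb, hq₁, hq₂⟩
  rw [heq ⟨haq, hqb.le⟩] at hq₁ hq₂
  exact hno ⟨q, haq, hqb, hle.trans_lt hq₁, hb ▸ hq₂⟩

theorem shrink_right (h : AllowedBT n σ a c) (hab : a < b) (hbc : b ≤ c)
    (heq : EqOn τ σ (Ico a b)) (hb : τ b = σ c) : AllowedBT n τ a b := by
  obtain ⟨-, hcn, hσa, hlt, hσc, hno⟩ := h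
  have ha : τ a = σ a := heq ⟨le_rfl, hab⟩
  refine ⟨hab, hbc.trans_lt hcn, ha ▸ hbc.trans hσa, ha ▸ hb ▸ hlt, hb ▸ hσc, ?_⟩
  rintro ⟨q, haq, hqb, hq₁, hq₂⟩
  rw [heq ⟨haq.le, hqb⟩] at hq₁ hq₂
  exact hno ⟨q, haq, hqb.trans_le hbc, ha ▸ hq₁, hb ▸ hq₂⟩

theorem comp_affT (h : AllowedBT n σ a c) (hab : a < b) (hbc : b < c) :
    AllowedBT n (σ ∘ affT n b c) a b := by
  have hcn : c < a + n := h.2.1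
  have hb : b ∈ Ico a (a + n) := ⟨hab.le, hbc.trans hcn⟩
  have hc : c ∈ Ico a (a + n) := ⟨(hab.trans hbc).le, hcn⟩
  refine h.shrink_right hab hbc.le (fun q hq => ?_) (congrArg σ (affT_apply_left hb hc))
  have hq' : q ∈ Ico a (a + n) := ⟨hq.1, hq.2.trans hb.2⟩
  exact congrArg σ (affT_apply_of_ne_of_ne hb hc hq' hq.2.ne (hq.2.trans hbc).ne)

theorem of_comp_affT (h : AllowedBT n (σ ∘ affT n a b) b c) (hab : a < b) (hcn : c < a + n)
    (hle : σ a ≤ σ b) (hlt : σ b < σ c) : AllowedBT n σ b c := by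
  have hbc : b < c := h.1
  have ha : a ∈ Ico a (a + n) := ⟨le_rfl, hab.trans (hbc.trans hcn)⟩
  have hb : b ∈ Ico a (a + n) := ⟨hab.le, hbc.trans hcn⟩
  refine h.raise_left (fun q hq => ?_) ?_ hlt
  · have hq' : q ∈ Ico a (a + n) := ⟨(hab.trans hq.1).le, hq.2.trans_lt hcn⟩
    exact (congrArg σ (affT_apply_of_ne_of_ne ha hb hq' (hab.trans hq.1).ne' hq.1.ne')).symm
  · rwa [Function.comp_apply, affT_apply_right ha hb]

end AllowedBT

end

/-- Case `(a c)` vs `(b c)` with `a < b < c < a + n`: `σ` and `σ'`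
have a common parent `ρ = σ ∘ t_{b,c}`, forming a quadrilateral in the poset. -/
theorem common_parent_ac_bc (n : ℤ) (hn : 0 < n) (σ σ' : ℤ → ℤ)
    (hσ : IsDecoratedPerm n σ) (hσ' : IsDecoratedPerm n σ')
    (a b c : ℤ) (hab : a < b) (hbc : b < c) (hca : c < a + n)
    (h1 : AllowedBT n σ a c) (h2 : AllowedBT n σ' b c)
    (heq : σ ∘ affT n a c = σ' ∘ affT n b c) :
    IsDecoratedPerm n (σ ∘ affT n b c) ∧
    AllowedBT n (σ ∘ affT n b c) b c ∧ (σ ∘ affT n b c) ∘ affT n b c = σ ∧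
    AllowedBT n (σ ∘ affT n b c) a b ∧ (σ ∘ affT n b c) ∘ affT n a b = σ' := by
  have ha : a ∈ Set.Ico a (a + n) := ⟨le_rfl, by omega⟩
  have hb : b ∈ Set.Ico a (a + n) := ⟨hab.le, by omega⟩
  have hc : c ∈ Set.Ico a (a + n) := ⟨by omega, hca⟩
  have hac : a ≠ c := (hab.trans hbc).ne
  have hσ'_eq : (σ ∘ affT n b c) ∘ affT n a b = σ' :=
    comp_affT_comp_affT_of_eq ha hb hc hab.ne hac heq
  have hρa : (σ ∘ affT n b c) a = σ a :=
    congrArg σ (affT_apply_of_ne_of_ne hb hc ha hab.ne hac)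
  have hρb : (σ ∘ affT n b c) b = σ c := congrArg σ (affT_apply_left hb hc)
  have hρc : (σ ∘ affT n b c) c = σ b := congrArg σ (affT_apply_right hb hc)
  have hσ'b : σ' b = σ a := by rw [← hσ'_eq, Function.comp_apply, affT_apply_right ha hb, hρa]
  have hσ'c : σ' c = σ b := by
    rw [← hσ'_eq, Function.comp_apply, affT_apply_of_ne_of_ne ha hb hc hac.symm hbc.ne', hρc]
  have ⟨_, hcn, hσ'b_ge, hσ'_lt, _⟩ := h2
  have ⟨_, _, _, hσ_lt, hσc_le, _⟩ := h1
  have hcb : σ c < σ b :=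
    h1.apply_right_lt_of_apply_left_lt hσ.1.injective hab hbc (by rwa [← hσ'b, ← hσ'c])
  refine ⟨hσ.comp_affT hbc hcn (by omega) (by omega), ?_, ?_, h1.comp_affT hab hbc, hσ'_eq⟩
  · exact (hσ'_eq ▸ h2).of_comp_affT hab hca (by omega) (by omega)
  · rw [Function.comp_assoc, (affT_involutive hb hc).comp_self, Function.comp_id]
end

section
/- Let n be a positive integer and let σ₀ be a decorated permutation of order n with σ₀(i) ∈ {i, i + n} for all i ∈ ℤ. Let a < b < a + n be integers with σ₀(a) = a and σ₀(b) = b + n. Define σ̃ : ℤ → ℤ by σ̃(a + mn) = b + mn and σ̃(b + mn) = a + n + mn for all m ∈ ℤ, and σ̃(q) = σ₀(q) for all q not congruent to a or b modulo n. Then: σ̃ is a decorated permutation of order n; (a b) is an allowed boundary transposition for σ̃, and σ̃ ∘ t_{a,b} is the decorated permutation τ satisfying τ(a) = a + n, τ(b) = b, and τ(q) = σ₀(q) for q not congruent to a or b modulo n; (b a+n) is an allowed boundary transposition for σ̃, and σ̃ ∘ t_{b,a+n} = σ₀; and these are the only allowed boundary transpositions (a' b') for σ̃ with 1 ≤ a'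 ≤ n, up to shifting both entries by the same multiple of n. -/
/-!
Call `q` a lollipop of `σ` if `σ q ∈ {q, q + n}`. The inequalities `a' < b' ≤ σ a' < σ b' ≤ a' + n`
in the definition of an allowed boundary transposition prevent `a'`, `b'` and any obstructing `q`
from being lollipops. The only non-lollipops of `σ̃ = σ₀ ∘ t_{b,a+n}` are the classes of `a` and
`b`, so a boundary transposition has to join a representative of one class to the next
representative of the other. The situation is invariant under `(a, b) ↦ (b, a + n)`, which makes
the two boundary transpositions one.
-/

section

variable {n a b i j q : ℤ} {σ ρ : ℤ → ℤ}

theorem eq_of_modEq_of_mem_Ico {c : ℤ} (h : i ≡ j [ZMOD n]) (hi : i ∈ Set.Ico c (c + n))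
    (hj : j ∈ Set.Ico c (c + n)) : i = j := by
  obtain ⟨hci, hic⟩ := hi
  obtain ⟨hcj, hjc⟩ := hj
  have habs : |j - i| < n := abs_lt.mpr ⟨by lia, by lia⟩
  have hsub : j - i = 0 := Int.eq_zero_of_abs_lt_dvd h.dvd habs
  lia

theorem not_modEq_of_lt_of_lt_add (hij : i < j) (hjn : j < i + n) : ¬ i ≡ j [ZMOD n] := fun h =>
  hij.ne (eq_of_modEq_of_mem_Ico (c := i) h ⟨le_rfl, by lia⟩ ⟨hij.le, hjn⟩)

theorem exists_eq_add_mul_of_modEq (h : i ≡ j [ZMOD n]) : ∃ m, i = j + m * n := by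
  obtain ⟨m, hm⟩ := Int.modEq_iff_add_fac.mp h.symm
  exact ⟨m, by rw [hm, mul_comm]⟩

theorem sub_emod_ne_zero_iff : (i - j) % n ≠ 0 ↔ ¬ i ≡ j [ZMOD n] :=
  Int.emod_eq_emod_iff_emod_sub_eq_zero.symm.not

theorem map_add_mul_of_map_add (hσ : ∀ i, σ (i + n) = σ i + n) (i m : ℤ) :
    σ (i + m * n) = σ i + m * n := by
  simpa only [smul_eq_mul, AddConstMap.coe_mk] using
    AddConstMapClass.map_add_zsmul (⟨σ, hσ⟩ : AddConstMap ℤ ℤ n n) i m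

theorem affT_of_not_modEq (ha : ¬ q ≡ a [ZMOD n]) (hb : ¬ q ≡ b [ZMOD n]) : affT n a b q = q := by
  rw [affT, if_neg (sub_emod_ne_zero_iff.mpr ha), if_neg (sub_emod_ne_zero_iff.mpr hb)]

theorem affT_left : affT n a b a = b := by
  rw [affT, if_pos (by rw [sub_self, Int.zero_emod]), add_sub_cancel]

theorem affT_right (hab : ¬ a ≡ b [ZMOD n]) : affT n a b b = a := by
  rw [affT, if_neg (sub_emod_ne_zero_iff.mpr (mt Int.ModEq.symm hab)),
    if_pos (by rw [sub_self, Int.zero_emod]), sub_sub_cancel]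

theorem affT_add_self (i : ℤ) : affT n a b (i + n) = affT n a b i + n := by
  simp only [affT, add_sub_right_comm, Int.add_emod_right]
  split_ifs <;> ring

theorem affT_left_add_mul (m : ℤ) : affT n a b (a + m * n) = b + m * n := by
  rw [map_add_mul_of_map_add affT_add_self, affT_left]

theorem affT_right_add_mul (hab : ¬ a ≡ b [ZMOD n]) (m : ℤ) :
    affT n a b (b + m * n) = a + m * n := by
  rw [map_add_mul_of_map_add affT_add_self, affT_right hab]

theorem affT_involutive_s13 (hab : ¬ a ≡ b [ZMOD n]) : Function.Involutive (affT n a b) := by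
  intro q
  by_cases ha : q ≡ a [ZMOD n]
  · obtain ⟨m, rfl⟩ := exists_eq_add_mul_of_modEq ha
    rw [affT_left_add_mul, affT_right_add_mul hab]
  by_cases hb : q ≡ b [ZMOD n]
  · obtain ⟨m, rfl⟩ := exists_eq_add_mul_of_modEq hb
    rw [affT_right_add_mul hab, affT_left_add_mul]
  · rw [affT_of_not_modEq ha hb, affT_of_not_modEq ha hb]

theorem eq_comp_affT (hσ : ∀ i, σ (i + n) = σ i + n) (hab : ¬ a ≡ b [ZMOD n])
    (hρa : ∀ m, ρ (a + m * n) = σ b + m * n) (hρb : ∀ m, ρ (b + m * n) = σ a + m * n)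
    (hρ : ∀ q, ¬ q ≡ a [ZMOD n] → ¬ q ≡ b [ZMOD n] → ρ q = σ q) : ρ = σ ∘ affT n a b := by
  funext q
  by_cases ha : q ≡ a [ZMOD n]
  · obtain ⟨m, rfl⟩ := exists_eq_add_mul_of_modEq ha
    rw [hρa, Function.comp_apply, affT_left_add_mul, map_add_mul_of_map_add hσ]
  by_cases hb : q ≡ b [ZMOD n]
  · obtain ⟨m, rfl⟩ := exists_eq_add_mul_of_modEq hb
    rw [hρb, Function.comp_apply, affT_right_add_mul hab, map_add_mul_of_map_add hσ]
  · rw [hρ q ha hb, Function.comp_apply, affT_of_not_modEq ha hb]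

theorem IsDecoratedPerm.comp_affT_s13 (hσ : IsDecoratedPerm n σ) (hab : ¬ a ≡ b [ZMOD n])
    (ha : σ a ∈ Set.Icc b (b + n)) (hb : σ b ∈ Set.Icc a (a + n)) :
    IsDecoratedPerm n (σ ∘ affT n a b) := by
  obtain ⟨hbij, hper, hbound⟩ := hσ
  refine ⟨hbij.comp (affT_involutive_s13 hab).bijective, fun i => ?_, fun q => ?_⟩
  · rw [Function.comp_apply, Function.comp_apply, affT_add_self, hper]
  by_cases hqa : q ≡ a [ZMOD n]
  · obtain ⟨m, rfl⟩ := exists_eq_add_mul_of_modEq hqa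
    rw [Function.comp_apply, affT_left_add_mul, map_add_mul_of_map_add hper]
    constructor <;> linarith [hb.1, hb.2]
  by_cases hqb : q ≡ b [ZMOD n]
  · obtain ⟨m, rfl⟩ := exists_eq_add_mul_of_modEq hqb
    rw [Function.comp_apply, affT_right_add_mul hab, map_add_mul_of_map_add hper]
    constructor <;> linarith [ha.1, ha.2]
  · simpa only [Function.comp_apply, affT_of_not_modEq hqa hqb] using hbound q

/-- `q` is a lollipop of the decorated permutation `σ` of order `n`, that is, a fixed point modulo
`n`, carrying either of its two decorations. -/
def IsLollipop (n : ℤ) (σ : ℤ → ℤ) (q : ℤ) : Prop :=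
  σ q = q ∨ σ q = q + n

namespace AllowedBT

theorem not_modEq (h : AllowedBT n σ a b) : ¬ a ≡ b [ZMOD n] :=
  not_modEq_of_lt_of_lt_add h.1 h.2.1

theorem not_isLollipop_left (h : AllowedBT n σ a b) : ¬ IsLollipop n σ a := by
  obtain ⟨hab, -, hbσa, hσ, hσb, -⟩ := h
  rintro (ha | ha) <;> lia

theorem not_isLollipop_right (h : AllowedBT n σ a b) : ¬ IsLollipop n σ b := by
  obtain ⟨hab, -, hbσa, hσ, hσb, -⟩ := h
  rintro (hb | hb) <;> lia

theorem isDecoratedPerm_comp (h : AllowedBT n σ a b) (hσ : IsDecoratedPerm n σ) :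
    IsDecoratedPerm n (σ ∘ affT n a b) := by
  have hab := h.not_modEq
  obtain ⟨hlt, -, hbσa, hσab, hσb, -⟩ := h
  exact hσ.comp_affT_s13 hab ⟨hbσa, by lia⟩ ⟨by lia, hσb⟩

end AllowedBT

/-- A decorated permutation indexing a 1-dimensional positroid cell: a single 2-cycle
`a ↦ b ↦ a + n` modulo `n`, all other positions being lollipops. The pair `(a, b)` is determined
only up to shifts by multiples of `n` and the rotation `(a, b) ↦ (b, a + n)`. -/
structure IsOneDimCell (n : ℤ) (σ : ℤ → ℤ) (a b : ℤ) : Prop where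
  isDecoratedPerm : IsDecoratedPerm n σ
  lt : a < b
  lt_add : b < a + n
  map_left : σ a = b
  map_right : σ b = a + n
  isLollipop : ∀ q, ¬ q ≡ a [ZMOD n] → ¬ q ≡ b [ZMOD n] → IsLollipop n σ q

namespace IsOneDimCell

theorem of_comp_affT (hσ : IsDecoratedPerm n σ) (hlol : ∀ q, IsLollipop n σ q) (hab : a < b)
    (hba : b < a + n) (ha : σ a = a) (hb : σ b = b + n) :
    IsOneDimCell n (σ ∘ affT n b (a + n)) a b := by
  have hne : ¬ b ≡ a + n [ZMOD n] := not_modEq_of_lt_of_lt_add hba (by lia)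
  have han : σ (a + n) = a + n := by rw [hσ.2.1, ha]
  refine ⟨hσ.comp_affT_s13 hne ⟨by lia, by lia⟩ ⟨by lia, by lia⟩, hab, hba, ?_, ?_, ?_⟩
  · have hright : affT n b (a + n) a = b + -1 * n := by
      simpa using affT_right_add_mul hne (-1)
    rw [Function.comp_apply, hright, map_add_mul_of_map_add hσ.2.1, hb]
    ring
  · rw [Function.comp_apply, affT_left, han]
  · intro q hqa hqb
    have hq : affT n b (a + n) q = q := affT_of_not_modEq hqb (by simpa using hqa)
    simpa only [IsLollipop, Function.comp_apply, hq] using hlol q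

theorem rotate (h : IsOneDimCell n σ a b) : IsOneDimCell n σ b (a + n) where
  isDecoratedPerm := h.isDecoratedPerm
  lt := h.lt_add
  lt_add := by have := h.lt; lia
  map_left := h.map_right
  map_right := by rw [h.isDecoratedPerm.2.1, h.map_left]
  isLollipop q hqb hqa := h.isLollipop q (by simpa using hqa) hqb

theorem allowedBT (h : IsOneDimCell n σ a b) : AllowedBT n σ a b := by
  have hab := h.lt
  have hba := h.lt_add
  have hσa := h.map_left
  have hσb := h.map_right
  refine ⟨hab, hba, hσa.ge, by lia, hσb.le, ?_⟩
  rintro ⟨q, haq, hqb, hlt, hgt⟩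
  have hqa : ¬ q ≡ a [ZMOD n] := fun hq =>
    not_modEq_of_lt_of_lt_add haq (by lia) hq.symm
  have hqb' : ¬ q ≡ b [ZMOD n] := not_modEq_of_lt_of_lt_add hqb (by lia)
  rcases h.isLollipop q hqa hqb' with hq | hq <;> lia

theorem exists_shift_of_modEq_left {a' b' : ℤ} (h : IsOneDimCell n σ a b)
    (h' : AllowedBT n σ a' b') (ha' : a' ≡ a [ZMOD n]) :
    ∃ m, a' = a + m * n ∧ b' = b + m * n := by
  obtain ⟨m, rfl⟩ := exists_eq_add_mul_of_modEq ha'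
  have hb'a : ¬ b' ≡ a [ZMOD n] := fun hb' => h'.not_modEq (ha'.trans hb'.symm)
  have hb'b : b' ≡ b [ZMOD n] := by
    by_contra hne
    exact h'.not_isLollipop_right (h.isLollipop b' hb'a hne)
  have hab := h.lt
  have hba := h.lt_add
  exact ⟨m, rfl, eq_of_modEq_of_mem_Ico (c := a + m * n) (by simpa using hb'b)
    ⟨h'.1.le, h'.2.1⟩ ⟨by lia, by lia⟩⟩

theorem exists_shift_of_allowedBT {a' b' : ℤ} (h : IsOneDimCell n σ a b)
    (h' : AllowedBT n σ a' b') :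
    ∃ m, (a' = a + m * n ∧ b' = b + m * n) ∨ (a' = b + m * n ∧ b' = a + n + m * n) := by
  by_cases ha : a' ≡ a [ZMOD n]
  · obtain ⟨m, hm⟩ := h.exists_shift_of_modEq_left h' ha
    exact ⟨m, .inl hm⟩
  by_cases hb : a' ≡ b [ZMOD n]
  · obtain ⟨m, hm⟩ := h.rotate.exists_shift_of_modEq_left h' hb
    exact ⟨m, .inr hm⟩
  · exact absurd (h.isLollipop a' ha hb) h'.not_isLollipop_left

end IsOneDimCell

end

/-- The 1-dimensional cell `σ̃` sitting above the lollipop permutation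
`σ₀` (with `σ₀ a = a`, `σ₀ b = b + n`) has exactly the two boundary transpositions
`(a b)` and `(b a+n)` (up to shifts by multiples of `n`), leading respectively to the
lollipop permutation `τ` (with `τ a = a + n`, `τ b = b`) and back to `σ₀`. -/
theorem one_dimensional_cell_boundaries (n : ℤ) (hn : 0 < n) (σ₀ : ℤ → ℤ)
    (hσ₀ : IsDecoratedPerm n σ₀) (hlol : ∀ i : ℤ, σ₀ i = i ∨ σ₀ i = i + n)
    (a b : ℤ) (hab : a < b) (hba : b < a + n)
    (ha : σ₀ a = a) (hb : σ₀ b = b + n)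
    (σt : ℤ → ℤ)
    (hσt1 : ∀ m : ℤ, σt (a + m * n) = b + m * n)
    (hσt2 : ∀ m : ℤ, σt (b + m * n) = a + n + m * n)
    (hσt3 : ∀ q : ℤ, (q - a) % n ≠ 0 → (q - b) % n ≠ 0 → σt q = σ₀ q) :
    IsDecoratedPerm n σt ∧
    AllowedBT n σt a b ∧
    (IsDecoratedPerm n (σt ∘ affT n a b) ∧
      (σt ∘ affT n a b) a = a + n ∧ (σt ∘ affT n a b) b = b ∧
      ∀ q : ℤ, (q - a) % n ≠ 0 → (q - b) % n ≠ 0 → (σt ∘ affT n a b) q = σ₀ q) ∧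
    AllowedBT n σt b (a + n) ∧ σt ∘ affT n b (a + n) = σ₀ ∧
    ∀ a' b' : ℤ, 1 ≤ a' → a' ≤ n → AllowedBT n σt a' b' →
      ∃ m : ℤ, (a' = a + m * n ∧ b' = b + m * n) ∨
        (a' = b + m * n ∧ b' = a + n + m * n) := by
  have hne : ¬ b ≡ a + n [ZMOD n] := not_modEq_of_lt_of_lt_add hba (by lia)
  simp only [sub_emod_ne_zero_iff] at hσt3 ⊢
  obtain rfl : σt = σ₀ ∘ affT n b (a + n) := by
    refine eq_comp_affT hσ₀.2.1 hne (fun m => ?_) (fun m => ?_) fun q hqb hqa => ?_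
    · rw [hσt2, hσ₀.2.1, ha]
    · rw [show a + n + m * n = a + (m + 1) * n by ring, hσt1, hb]
      ring
    · exact hσt3 q (by simpa using hqa) hqb
  have hcell := IsOneDimCell.of_comp_affT hσ₀ hlol hab hba ha hb
  have hbt := hcell.allowedBT
  refine ⟨hcell.isDecoratedPerm, hbt, ⟨hbt.isDecoratedPerm_comp hcell.isDecoratedPerm, ?_, ?_, ?_⟩,
    hcell.rotate.allowedBT, ?_, fun a' b' _ _ => hcell.exists_shift_of_allowedBT⟩
  · rw [Function.comp_apply, affT_left, hcell.map_right]
  · rw [Function.comp_apply, affT_right hbt.not_modEq, hcell.map_left]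
  · intro q hqa hqb
    rw [Function.comp_apply, affT_of_not_modEq hqa hqb, hσt3 q hqa hqb]
  · rw [Function.comp_assoc, (affT_involutive_s13 hne).comp_self, Function.comp_id]
end
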